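/- arXiv:1407.6215 — 2 statements merged into one kernel-verified Lean document; each statement's English description precedes it below -/
import Mathlib

section
/- Let G be a finite group with G ∈ CD(G) and Z(G) ∈ CD(G) such that the interval ⟦Z(G), G⟧ in CD(G) is a quasi-antichain having at least three pairwise distinct atoms. Then there exists a prime p such that G/Z(G) and the commutator subgroup [G,G] are elementary abelian p-groups. -/
/-- The Chermak-Delgado measure of a subgroup `H` of a finite group `G`:
`m_G(H) = |H| · |C_G(H)|`. -/
noncomputable def CDmeasure {G : Type*} [Group G] (H : Subgroup G) : ℕ :=
  Nat.card H * Nat.card (Subgroup.centralizer (H : Set G))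

/-- `H` belongs to the Chermak-Delgado lattice of `G`: its measure is maximal. -/
def inCD {G : Type*} [Group G] (H : Subgroup G) : Prop :=
  ∀ K : Subgroup G, CDmeasure K ≤ CDmeasure H

/-!
From `|HK| * |H ⊓ K| = |H| * |K|`, applied to `H, K` and to their centralizers, the measure `m`
satisfies `m(H) m(K) ≤ m(H ⊔ K) m(H ⊓ K)`. Hence `CD(G)` is a lattice, and equality forces
`H ⊔ K = HK` for its members. So an atom `K` is normal: otherwise `G` would be the product of `K`
and a conjugate of `K`. Distinct atoms intersect in `Z = Z(G)` and generate `G`; with three of them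
`A, B, C` we get `[A, G] = [A, BC] ≤ (A ⊓ B)(A ⊓ C) = Z`, and likewise for `B`, so `G / Z` is
abelian.

Let `p` be a prime dividing `|G / Z|` and let `T / Z` be the `p`-torsion of `G / Z`. As `G` has
class two, `T` centralizes the preimage of `(G / Z) ^ p`, and counting gives `m(T) ≥ |G| |Z| =
m(G)`. Thus `T ∈ CD(G)`. If `T` were an atom, there would be two further atoms, both meeting `T`
in `Z`; then raising to the `p`-th power would be injective on `G / Z`, the product of their
images, which contradicts `Z < T`. So `T = G`, and bilinearity of the commutator gives `[G, G]`
exponent `p`.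
-/

open scoped commutatorElement IsMulCommutative Pointwise
open Subgroup

section Products

variable {G : Type*} [Group G]

theorem card_image_mk_eq_relIndex (H K : Subgroup G) :
    Nat.card (QuotientGroup.mk '' (H : Set G) : Set (G ⧸ K)) = K.relIndex H := by
  have orbit_eq : MulAction.orbit H ((1 : G) : G ⧸ K) = QuotientGroup.mk '' (H : Set G) := by
    rw [Set.image_eq_range]
    exact congrArg Set.range (funext fun h => congrArg QuotientGroup.mk (mul_one (h : G)))
  have stabilizer_eq : MulAction.stabilizer H ((1 : G) : G ⧸ K) = K.subgroupOf H := by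
    ext h
    change ((h * 1 : G) : G ⧸ K) = ((1 : G) : G ⧸ K) ↔ (h : G) ∈ K
    rw [QuotientGroup.eq, mul_one, mul_one, inv_mem_iff]
  rw [← orbit_eq, Nat.card_coe_set_eq, ← MulAction.index_stabilizer, stabilizer_eq, relIndex]

theorem card_mul_mul_card_inf (H K : Subgroup G) :
    Nat.card ((H : Set G) * (K : Set G) : Set G) * Nat.card (H ⊓ K : Subgroup G) =
      Nat.card H * Nat.card K := by
  have card_mul_relIndex : Nat.card (H ⊓ K : Subgroup G) * K.relIndex H = Nat.card H := by
    rw [← relIndex_bot_left, ← inf_relIndex_left H K, ← relIndex_bot_left]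
    exact relIndex_mul_relIndex _ _ _ bot_le inf_le_left
  rw [card_mul_eq_card_subgroup_mul_card_quotient, card_image_mk_eq_relIndex, mul_assoc,
    mul_comm (K.relIndex H), card_mul_relIndex, mul_comm]

theorem eq_top_of_mul_conj_smul_eq_univ {H : Subgroup G} {x : G}
    (h : (H : Set G) * ((MulAut.conj x • H : Subgroup G) : Set G) = Set.univ) : H = ⊤ := by
  obtain ⟨m, hm, _, ⟨n, hn, rfl⟩, hmn⟩ : x⁻¹ ∈ (H : Set G) * (MulAut.conj x • H : Subgroup G) :=
    h ▸ Set.mem_univ _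
  have hx : x = m⁻¹ * n⁻¹ := by
    rw [eq_mul_inv_iff_mul_eq, ← mul_eq_one_iff_eq_inv', ← mul_left_inj x⁻¹, one_mul, mul_assoc]
    exact hmn
  have hxH : x ∈ H := hx ▸ mul_mem (inv_mem hm) (inv_mem hn)
  rw [conj_smul_eq_self_of_mem hxH, coe_mul_coe] at h
  exact coe_eq_univ.1 h

end Products

section Commutators

variable {G : Type*} [Group G]

theorem commutator_sup_le {H₁ H₂ K N : Subgroup G} [N.Normal] (h₁ : ⁅H₁, K⁆ ≤ N)
    (h₂ : ⁅H₂, K⁆ ≤ N) : ⁅H₁ ⊔ H₂, K⁆ ≤ N := by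
  have le_iff_map_le (L : Subgroup G) : ⁅L, K⁆ ≤ N ↔
      L.map (QuotientGroup.mk' N) ≤ centralizer (K.map (QuotientGroup.mk' N)) := by
    rw [← commutator_eq_bot_iff_le_centralizer, ← map_commutator, Subgroup.map_eq_bot_iff,
      QuotientGroup.ker_mk']
  rw [le_iff_map_le] at h₁ h₂ ⊢
  rw [Subgroup.map_sup]
  exact sup_le h₁ h₂

theorem commutator_le_of_pairwise_inf_le_of_pairwise_sup_eq_top {A B C N : Subgroup G}
    [A.Normal] [B.Normal] [C.Normal] [N.Normal]
    (hAB : A ⊓ B ≤ N) (hAC : A ⊓ C ≤ N) (hBC : B ⊓ C ≤ N)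
    (hAB' : A ⊔ B = ⊤) (hAC' : A ⊔ C = ⊤) (hBC' : B ⊔ C = ⊤) : commutator G ≤ N := by
  have comm_AB : ⁅A, B⁆ ≤ N := (commutator_le_inf A B).trans hAB
  have comm_AC : ⁅A, C⁆ ≤ N := (commutator_le_inf A C).trans hAC
  have comm_BC : ⁅B, C⁆ ≤ N := (commutator_le_inf B C).trans hBC
  have comm_A : ⁅A, ⊤⁆ ≤ N := by
    rw [commutator_comm, ← hBC']
    exact commutator_sup_le (commutator_comm A B ▸ comm_AB) (commutator_comm A C ▸ comm_AC)
  have comm_B : ⁅B, ⊤⁆ ≤ N := by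
    rw [commutator_comm, ← hAC']
    exact commutator_sup_le comm_AB (commutator_comm B C ▸ comm_BC)
  rw [commutator_def]
  nth_rw 1 [← hAB']
  exact commutator_sup_le comm_A comm_B

theorem commutatorElement_pow_right {x g : G} (h : Commute ⁅x, g⁆ g) (n : ℕ) :
    ⁅x, g ^ n⁆ = ⁅x, g⁆ ^ n := by
  have conj_eq : x * g * x⁻¹ = ⁅x, g⁆ * g := by rw [commutatorElement_def]; group
  rw [commutatorElement_def, ← conj_pow, conj_eq, h.mul_pow, mul_inv_cancel_right]

theorem commutatorElement_pow_left {x g : G} (h : Commute ⁅x, g⁆ x) (n : ℕ) :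
    ⁅x ^ n, g⁆ = ⁅x, g⁆ ^ n := by
  rw [← commutatorElement_inv g x] at h
  rw [← commutatorElement_inv, commutatorElement_pow_right (Commute.inv_left_iff.1 h), ← inv_pow,
    commutatorElement_inv]

theorem commutatorElement_pow_eq_one_of_pow_mem_center {x g : G} {n : ℕ}
    (hc : ⁅x, g⁆ ∈ center G) (hx : x ^ n ∈ center G) : ⁅x, g⁆ ^ n = 1 := by
  rw [← commutatorElement_pow_left (mem_center_iff.1 hc x).symm]
  exact Commute.commutator_eq (mem_center_iff.1 hx g).symm

theorem commute_pow_of_pow_mem_center {x g : G} {n : ℕ} (hc : ⁅x, g⁆ ∈ center G)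
    (hx : x ^ n ∈ center G) : Commute x (g ^ n) := by
  rw [← commutatorElement_eq_one_iff_commute,
    commutatorElement_pow_right (mem_center_iff.1 hc g).symm,
    commutatorElement_pow_eq_one_of_pow_mem_center hc hx]

theorem pow_eq_one_of_mem_commutator {n : ℕ} (hc : commutator G ≤ center G)
    (hn : ∀ x : G, x ^ n ∈ center G) {c : G} (h : c ∈ commutator G) : c ^ n = 1 := by
  have commutator_le_torsion :
      commutator G ≤ (powMonoidHom n : center G →* center G).ker.map (center G).subtype := by
    rw [commutator_def, commutator_le]
    intro x _ g _
    have hxg : ⁅x, g⁆ ∈ center G := hc (commutator_mem_commutator (mem_top x) (mem_top g))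
    exact ⟨⟨_, hxg⟩, Subtype.ext (commutatorElement_pow_eq_one_of_pow_mem_center hxg (hn x)), rfl⟩
  obtain ⟨z, hz, rfl⟩ := commutator_le_torsion h
  exact congrArg Subtype.val hz

end Commutators

section Torsion

variable {G : Type*} [Group G]

/-- The preimage in `G` of the `n`-torsion of the abelian group `G ⧸ N`. -/
def torsionModulo (N : Subgroup G) [N.Normal] [IsMulCommutative (G ⧸ N)] (n : ℕ) : Subgroup G :=
  (powMonoidHom n : G ⧸ N →* G ⧸ N).ker.comap (QuotientGroup.mk' N)

variable {N A B : Subgroup G} [N.Normal] [IsMulCommutative (G ⧸ N)] {n : ℕ}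

theorem mem_torsionModulo {x : G} : x ∈ torsionModulo N n ↔ x ^ n ∈ N := by
  rw [← QuotientGroup.eq_one_iff (N := N)]
  rfl

theorem le_torsionModulo : N ≤ torsionModulo N n :=
  fun _ hx => mem_torsionModulo.2 (pow_mem hx n)

theorem torsionModulo_le_of_inf_le [B.Normal] (hNB : N ≤ B) (hinf : A ⊓ B ≤ N)
    (hsup : A ⊔ B = ⊤) (hA : torsionModulo N n ⊓ A ≤ N) (hB : torsionModulo N n ⊓ B ≤ N) :
    torsionModulo N n ≤ N := by
  intro y hy
  obtain ⟨a, ha, b, hb, rfl⟩ := mem_sup_of_normal_right.1 (hsup ▸ mem_top y)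
  have hab : a ^ n * b ^ n ∈ N := by
    rw [← QuotientGroup.eq_one_iff]
    exact (mul_pow (a : G ⧸ N) b n).symm.trans hy
  have han : a ^ n ∈ N :=
    hinf ⟨pow_mem ha n, (mul_mem_cancel_right (pow_mem hb n)).1 (hNB hab)⟩
  have hbn : b ^ n ∈ N := (mul_mem_cancel_left han).1 hab
  exact mul_mem (hA ⟨mem_torsionModulo.2 han, ha⟩) (hB ⟨mem_torsionModulo.2 hbn, hb⟩)

theorem exists_prime_lt_torsionModulo [Finite G] (hN : N < ⊤) :
    ∃ p : ℕ, p.Prime ∧ N < torsionModulo N p := by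
  have index_ne_one : Nat.card (G ⧸ N) ≠ 1 := index_eq_one.not.2 hN.ne
  obtain ⟨p, hp, hdvd⟩ := Nat.exists_prime_and_dvd index_ne_one
  have := Fact.mk hp
  obtain ⟨q, hq⟩ := exists_prime_orderOf_dvd_card' p hdvd
  obtain ⟨x, rfl⟩ := QuotientGroup.mk_surjective q
  refine ⟨p, hp, SetLike.lt_iff_le_and_exists.2 ⟨le_torsionModulo, x, ?_, ?_⟩⟩
  · rw [mem_torsionModulo, ← QuotientGroup.eq_one_iff, QuotientGroup.mk_pow, ← hq,
      pow_orderOf_eq_one]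
  · rw [← QuotientGroup.eq_one_iff, ← orderOf_eq_one_iff, hq]
    exact hp.ne_one

end Torsion

section CentralizerLattice

variable {G : Type*} [Group G]

theorem centralizer_coe_sup (H K : Subgroup G) :
    centralizer ((H ⊔ K : Subgroup G) : Set G) = centralizer (H : Set G) ⊓ centralizer K := by
  refine eq_of_forall_le_iff fun L => ?_
  simp only [le_inf_iff, le_centralizer_iff (H := L), sup_le_iff]

theorem centralizer_mul_centralizer_subset (H K : Subgroup G) :
    (centralizer (H : Set G) : Set G) * (centralizer (K : Set G) : Set G) ⊆
      centralizer ((H ⊓ K : Subgroup G) : Set G) := by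
  rintro _ ⟨a, ha, b, hb, rfl⟩
  exact mul_mem (centralizer_le (SetLike.coe_subset_coe.2 inf_le_left) ha)
    (centralizer_le (SetLike.coe_subset_coe.2 inf_le_right) hb)

theorem mul_subset_coe_sup (H K : Subgroup G) :
    (H : Set G) * (K : Set G) ⊆ ((H ⊔ K : Subgroup G) : Set G) := by
  rintro _ ⟨h, hh, k, hk, rfl⟩
  exact mul_mem_sup hh hk

end CentralizerLattice

section ChermakDelgado

variable {G : Type*} [Group G]

theorem CDmeasure_top : CDmeasure (⊤ : Subgroup G) = Nat.card G * Nat.card (center G) := by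
  rw [CDmeasure, card_top, coe_top, centralizer_univ]

theorem inCD.of_CDmeasure_le {H K : Subgroup G} (hH : inCD H) (h : CDmeasure H ≤ CDmeasure K) :
    inCD K :=
  fun L => (hH L).trans h

variable [Finite G]

theorem CDmeasure_pos (H : Subgroup G) : 0 < CDmeasure H :=
  Nat.mul_pos Nat.card_pos Nat.card_pos

theorem card_mul_mul_card_centralizer_le_CDmeasure_sup (H K : Subgroup G) :
    Nat.card ((H : Set G) * (K : Set G) : Set G) *
      Nat.card (centralizer ((H ⊔ K : Subgroup G) : Set G)) ≤ CDmeasure (H ⊔ K) :=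
  Nat.mul_le_mul_right _ (Nat.card_mono (Set.toFinite _) (mul_subset_coe_sup H K))

theorem CDmeasure_mul_CDmeasure_le (H K : Subgroup G) :
    CDmeasure H * CDmeasure K ≤
      Nat.card ((H : Set G) * (K : Set G) : Set G) *
        Nat.card (centralizer ((H ⊔ K : Subgroup G) : Set G)) * CDmeasure (H ⊓ K) := by
  set CH := centralizer (H : Set G)
  set CK := centralizer (K : Set G)
  calc CDmeasure H * CDmeasure K
      = Nat.card H * Nat.card K * (Nat.card CH * Nat.card CK) := mul_mul_mul_comm ..
    _ = Nat.card ((H : Set G) * (K : Set G) : Set G) * Nat.card (H ⊓ K : Subgroup G) *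
          (Nat.card ((CH : Set G) * (CK : Set G) : Set G) * Nat.card (CH ⊓ CK : Subgroup G)) := by
        rw [card_mul_mul_card_inf, card_mul_mul_card_inf]
    _ ≤ Nat.card ((H : Set G) * (K : Set G) : Set G) * Nat.card (H ⊓ K : Subgroup G) *
          (Nat.card (centralizer ((H ⊓ K : Subgroup G) : Set G)) *
            Nat.card (CH ⊓ CK : Subgroup G)) := by
        gcongr
        exact Nat.card_mono (Set.toFinite _) (centralizer_mul_centralizer_subset H K)
    _ = _ := by rw [centralizer_coe_sup, CDmeasure]; ring

theorem CDmeasure_le_CDmeasure_smul (H : Subgroup G) (e : MulAut G) :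
    CDmeasure H ≤ CDmeasure (e • H) := by
  have card_smul (K : Subgroup G) : Nat.card (e • K : Subgroup G) = Nat.card K :=
    (Nat.card_congr (equivSMul e K).toEquiv).symm
  rw [CDmeasure, CDmeasure, card_smul, ← card_smul (centralizer H)]
  exact Nat.mul_le_mul_left _ (Nat.card_mono (Set.toFinite _)
    (map_centralizer_le_centralizer_image (H : Set G) _))

namespace inCD

variable {H K : Subgroup G}

theorem smul (hH : inCD H) (e : MulAut G) : inCD (e • H) :=
  hH.of_CDmeasure_le (CDmeasure_le_CDmeasure_smul H e)

theorem CDmeasure_le_card_mul_mul_card_centralizer (hK : inCD K) (H : Subgroup G) :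
    CDmeasure H ≤ Nat.card ((H : Set G) * (K : Set G) : Set G) *
      Nat.card (centralizer ((H ⊔ K : Subgroup G) : Set G)) :=
  le_of_mul_le_mul_right ((CDmeasure_mul_CDmeasure_le H K).trans
    (Nat.mul_le_mul_left _ (hK (H ⊓ K)))) (CDmeasure_pos K)

theorem sup (hH : inCD H) (hK : inCD K) : inCD (H ⊔ K) :=
  hH.of_CDmeasure_le ((hK.CDmeasure_le_card_mul_mul_card_centralizer H).trans
    (card_mul_mul_card_centralizer_le_CDmeasure_sup H K))

theorem inf (hH : inCD H) (hK : inCD K) : inCD (H ⊓ K) := by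
  refine hK.of_CDmeasure_le (le_of_mul_le_mul_left ?_ (CDmeasure_pos H))
  calc CDmeasure H * CDmeasure K
      ≤ _ := CDmeasure_mul_CDmeasure_le H K
    _ ≤ CDmeasure H * CDmeasure (H ⊓ K) := Nat.mul_le_mul_right _
        ((card_mul_mul_card_centralizer_le_CDmeasure_sup H K).trans (hH (H ⊔ K)))

theorem coe_sup_eq_mul (hH : inCD H) (hK : inCD K) :
    ((H ⊔ K : Subgroup G) : Set G) = (H : Set G) * (K : Set G) := by
  have card_sup_le : Nat.card (H ⊔ K : Subgroup G) ≤
      Nat.card ((H : Set G) * (K : Set G) : Set G) :=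
    le_of_mul_le_mul_right ((hH (H ⊔ K)).trans
      (hK.CDmeasure_le_card_mul_mul_card_centralizer H)) Nat.card_pos
  exact (Set.eq_of_subset_of_ncard_le (mul_subset_coe_sup H K) card_sup_le).symm

end inCD

theorem inCD_torsionModulo_center [IsMulCommutative (G ⧸ center G)]
    (hG : inCD (⊤ : Subgroup G)) (n : ℕ) : inCD (torsionModulo (center G) n) := by
  set f : G ⧸ center G →* G ⧸ center G := powMonoidHom n
  have range_le_centralizer : f.range.comap (QuotientGroup.mk' (center G)) ≤
      centralizer (torsionModulo (center G) n : Set G) := by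
    rintro w ⟨q, hq⟩ x hx
    obtain ⟨g, rfl⟩ := QuotientGroup.mk_surjective q
    have hxg : ⁅x, g⁆ ∈ center G := Normal.quotient_commutative_iff_commutator_le.1 inferInstance
      (commutator_mem_commutator (mem_top x) (mem_top g))
    have hw : (g ^ n)⁻¹ * w ∈ center G := QuotientGroup.eq.1 hq
    have comm_w := (commute_pow_of_pow_mem_center hxg (mem_torsionModulo.1 hx)).mul_right
      (mem_center_iff.1 hw x)
    rwa [mul_inv_cancel_left] at comm_w
  have card_ker_mul_card_range : Nat.card f.ker * Nat.card f.range = Nat.card (G ⧸ center G) := by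
    rw [← index_ker, card_mul_index]
  refine hG.of_CDmeasure_le ?_
  calc CDmeasure (⊤ : Subgroup G)
      = Nat.card (G ⧸ center G) * Nat.card (center G) * Nat.card (center G) := by
        rw [CDmeasure_top, card_eq_card_quotient_mul_card_subgroup (center G)]
    _ = (Nat.card (center G) * Nat.card f.ker) * (Nat.card (center G) * Nat.card f.range) := by
        rw [← card_ker_mul_card_range]; ring
    _ = Nat.card (torsionModulo (center G) n) *
          Nat.card (f.range.comap (QuotientGroup.mk' (center G))) :=
        congrArg₂ (· * ·) (QuotientGroup.card_preimage_mk _ _).symm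
          (QuotientGroup.card_preimage_mk _ _).symm
    _ ≤ CDmeasure (torsionModulo (center G) n) :=
        Nat.mul_le_mul_left _ (card_le_of_le range_le_centralizer)

end ChermakDelgado

section QuasiAntichain

/-- The members of `CD(G)` strictly between `Z(G)` and `G`. They are the atoms of `⟦Z(G), G⟧`
when this interval is a quasi-antichain, that is, when they form an antichain. -/
def cdAtoms (G : Type*) [Group G] : Set (Subgroup G) :=
  {K | inCD K ∧ center G < K ∧ K < ⊤}

variable {G : Type*} [Group G]
  (anti : IsAntichain (· ≤ ·) (cdAtoms G)) {A B C K L : Subgroup G}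

include anti

theorem eq_or_eq_top_of_cdAtom_le (hK : K ∈ cdAtoms G) (hL : inCD L) (hKL : K ≤ L) :
    K = L ∨ L = ⊤ :=
  or_iff_not_imp_right.2 fun hL' =>
    anti.eq hK ⟨hL, hK.2.1.trans_le hKL, lt_top_iff_ne_top.2 hL'⟩ hKL

theorem eq_or_eq_center_of_le_cdAtom (hK : K ∈ cdAtoms G) (hL : inCD L) (hZL : center G ≤ L)
    (hLK : L ≤ K) : L = K ∨ L = center G :=
  or_iff_not_imp_right.2 fun hL' =>
    anti.eq ⟨hL, hZL.lt_of_ne' hL', hLK.trans_lt hK.2.2⟩ hK hLK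

variable [Finite G]

theorem sup_eq_top_of_cdAtoms (hA : A ∈ cdAtoms G) (hB : B ∈ cdAtoms G) (hAB : A ≠ B) :
    A ⊔ B = ⊤ := by
  have hsup : inCD (A ⊔ B) := hA.1.sup hB.1
  rcases eq_or_eq_top_of_cdAtom_le anti hA hsup le_sup_left with hA' | htop
  · exact absurd (anti.eq' hA hB (hA' ▸ le_sup_right)) hAB
  · exact htop

theorem inf_le_center_of_cdAtoms (hA : A ∈ cdAtoms G) (hB : B ∈ cdAtoms G) (hAB : A ≠ B) :
    A ⊓ B ≤ center G := by
  have hinf : inCD (A ⊓ B) := hA.1.inf hB.1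
  rcases eq_or_eq_center_of_le_cdAtom anti hA hinf (le_inf hA.2.1.le hB.2.1.le) inf_le_left
    with hA' | hZ
  · exact absurd (anti.eq hA hB (inf_eq_left.1 hA')) hAB
  · exact hZ.le

theorem normal_of_mem_cdAtoms (hK : K ∈ cdAtoms G) : K.Normal := by
  have conj_le (x : G) : MulAut.conj x • K ≤ K := by
    have hconj : inCD (MulAut.conj x • K) := hK.1.smul _
    rcases eq_or_eq_top_of_cdAtom_le anti hK (hK.1.sup hconj) le_sup_left with hsup | htop
    · exact left_eq_sup.1 hsup
    · have mul_eq_univ := hK.1.coe_sup_eq_mul hconj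
      rw [htop, coe_top] at mul_eq_univ
      exact absurd (eq_top_of_mul_conj_smul_eq_univ mul_eq_univ.symm) hK.2.2.ne
  exact ⟨fun k hk x => conj_le x (smul_mem_pointwise_smul k (MulAut.conj x) K hk)⟩

theorem commutator_le_center_of_three_cdAtoms (hA : A ∈ cdAtoms G) (hB : B ∈ cdAtoms G)
    (hC : C ∈ cdAtoms G) (hAB : A ≠ B) (hAC : A ≠ C) (hBC : B ≠ C) :
    commutator G ≤ center G := by
  have := normal_of_mem_cdAtoms anti hA
  have := normal_of_mem_cdAtoms anti hB
  have := normal_of_mem_cdAtoms anti hC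
  exact commutator_le_of_pairwise_inf_le_of_pairwise_sup_eq_top
    (inf_le_center_of_cdAtoms anti hA hB hAB) (inf_le_center_of_cdAtoms anti hA hC hAC)
    (inf_le_center_of_cdAtoms anti hB hC hBC) (sup_eq_top_of_cdAtoms anti hA hB hAB)
    (sup_eq_top_of_cdAtoms anti hA hC hAC) (sup_eq_top_of_cdAtoms anti hB hC hBC)

theorem torsionModulo_center_not_mem_cdAtoms [IsMulCommutative (G ⧸ center G)] {n : ℕ}
    (hA : A ∈ cdAtoms G) (hB : B ∈ cdAtoms G) (hAB : A ≠ B)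
    (hA' : A ≠ torsionModulo (center G) n) (hB' : B ≠ torsionModulo (center G) n) :
    torsionModulo (center G) n ∉ cdAtoms G := by
  intro hT
  have := normal_of_mem_cdAtoms anti hB
  exact hT.2.1.not_ge (torsionModulo_le_of_inf_le hB.2.1.le
    (inf_le_center_of_cdAtoms anti hA hB hAB) (sup_eq_top_of_cdAtoms anti hA hB hAB)
    (inf_le_center_of_cdAtoms anti hT hA hA'.symm) (inf_le_center_of_cdAtoms anti hT hB hB'.symm))

theorem exists_prime_forall_pow_mem_center [IsMulCommutative (G ⧸ center G)]
    (hG : inCD (⊤ : Subgroup G)) (hA : A ∈ cdAtoms G) (hB : B ∈ cdAtoms G) (hC : C ∈ cdAtoms G)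
    (hAB : A ≠ B) (hAC : A ≠ C) (hBC : B ≠ C) :
    ∃ p : ℕ, p.Prime ∧ ∀ x : G, x ^ p ∈ center G := by
  obtain ⟨p, hp, hlt⟩ := exists_prime_lt_torsionModulo (hA.2.1.trans hA.2.2)
  have not_mem : torsionModulo (center G) p ∉ cdAtoms G := by
    by_cases hA' : A = torsionModulo (center G) p
    · exact torsionModulo_center_not_mem_cdAtoms anti hB hC hBC (hA' ▸ hAB.symm) (hA' ▸ hAC.symm)
    by_cases hB' : B = torsionModulo (center G) p
    · exact torsionModulo_center_not_mem_cdAtoms anti hA hC hAC hA' (hB' ▸ hBC.symm)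
    exact torsionModulo_center_not_mem_cdAtoms anti hA hB hAB hA' hB'
  have eq_top : torsionModulo (center G) p = ⊤ := by
    by_contra hne
    exact not_mem ⟨inCD_torsionModulo_center hG p, hlt, lt_top_iff_ne_top.2 hne⟩
  exact ⟨p, hp, fun x => mem_torsionModulo.1 (eq_top ▸ mem_top x)⟩

end QuasiAntichain

/-- if `G ∈ CD(G)` and `Z(G) ∈ CD(G)`, and the interval
`⟦Z(G), G⟧` in `CD(G)` is a quasi-antichain with at least three pairwise
distinct atoms, then there is a prime `p` such that `G/Z(G)` and `[G,G]` are
elementary abelian `p`-groups. -/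
theorem stmt5 {G : Type*} [Group G] [Finite G]
    (hG : inCD (⊤ : Subgroup G)) (hZ : inCD (Subgroup.center G))
    (hqa : ∀ K K' : Subgroup G, inCD K → inCD K' →
      Subgroup.center G < K → K ≤ K' → K' < ⊤ → K = K')
    (hthree : ∃ K1 K2 K3 : Subgroup G,
      (inCD K1 ∧ Subgroup.center G < K1 ∧ K1 < ⊤) ∧
      (inCD K2 ∧ Subgroup.center G < K2 ∧ K2 < ⊤) ∧
      (inCD K3 ∧ Subgroup.center G < K3 ∧ K3 < ⊤) ∧
      K1 ≠ K2 ∧ K1 ≠ K3 ∧ K2 ≠ K3) :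
    ∃ p : ℕ, p.Prime ∧
      (∀ x y : G ⧸ Subgroup.center G, x * y = y * x) ∧
      (∀ x : G ⧸ Subgroup.center G, x ^ p = 1) ∧
      (∀ x y : commutator G, x * y = y * x) ∧
      (∀ x : commutator G, x ^ p = 1) := by
  obtain ⟨A, B, C, hA, hB, hC, hAB, hAC, hBC⟩ := hthree
  have anti : IsAntichain (· ≤ ·) (cdAtoms G) := fun K hK L hL hne hle =>
    hne (hqa K L hK.1 hL.1 hK.2.1 hle hL.2.2)
  have comm_le : commutator G ≤ Subgroup.center G :=
    commutator_le_center_of_three_cdAtoms anti hA hB hC hAB hAC hBC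
  have : IsMulCommutative (G ⧸ Subgroup.center G) :=
    Subgroup.Normal.quotient_commutative_iff_commutator_le.2 comm_le
  obtain ⟨p, hp, hpow⟩ := exists_prime_forall_pow_mem_center anti hG hA hB hC hAB hAC hBC
  refine ⟨p, hp, mul_comm, fun x => ?_, fun x y => Subtype.ext ?_, fun x => Subtype.ext ?_⟩
  · obtain ⟨g, rfl⟩ := QuotientGroup.mk_surjective x
    exact (QuotientGroup.eq_one_iff (g ^ p)).2 (hpow g)
  · exact Subgroup.mem_center_iff.1 (comm_le y.2) x
  · exact pow_eq_one_of_mem_commutator comm_le hpow x.2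
end

section
/- For every prime p there exists a finite group P of order p^9 such that CD(P) is a quasi-antichain of width p + 1 with P ∈ CD(P), and the number of abelian atoms of CD(P) is: exactly one (of the three atoms) if p = 2; exactly two (of the p + 1 atoms) if p ≡ 1 (mod 4); and zero if p ≡ 3 (mod 4). -/
/-- `P` has order `p^9`, `CD(P)` is a quasi-antichain of width `p + 1` with
`P ∈ CD(P)`, and the number of abelian atoms is 1 if `p = 2`, 2 if
`p ≡ 1 (mod 4)`, and 0 if `p ≡ 3 (mod 4)`. -/
def GoodCDwidthPplus1 (P : Type*) [Group P] [Finite P] (p : ℕ) : Prop :=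
  Nat.card P = p ^ 9 ∧
  inCD (⊤ : Subgroup P) ∧ inCD (Subgroup.center P) ∧
  (∀ K : Subgroup P, inCD K → Subgroup.center P ≤ K) ∧
  (∀ K K' : Subgroup P, inCD K → inCD K' →
    Subgroup.center P < K → K ≤ K' → K' < ⊤ → K = K') ∧
  {K : Subgroup P | inCD K ∧ Subgroup.center P < K ∧ K < ⊤}.ncard = p + 1 ∧
  (p = 2 → {K : Subgroup P | inCD K ∧ Subgroup.center P < K ∧ K < ⊤ ∧
    ∀ x y : K, x * y = y * x}.ncard = 1) ∧
  (p % 4 = 1 → {K : Subgroup P | inCD K ∧ Subgroup.center P < K ∧ K < ⊤ ∧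
    ∀ x y : K, x * y = y * x}.ncard = 2) ∧
  (p % 4 = 3 → {K : Subgroup P | inCD K ∧ Subgroup.center P < K ∧ K < ⊤ ∧
    ∀ x y : K, x * y = y * x}.ncard = 0)

/-!
The group is the central extension of `F² ⊗ F³` by `F³`, where `F` is the field with `p` elements,
whose commutator form is the standard symmetric form on `F²` tensored with the cross product on
`F³`. Its Chermak-Delgado lattice consists of the preimages of the subspaces `U` for which
`dim U + dim U^⊥` is maximal. For `U = a ⊗ F³` the orthogonal complement is `a^⊥ ⊗ F³`, so the sum
is `6`, as it is for `0` and the whole space. Conversely, suppose that `U` and `U^⊥` are nonzero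
and that their dimensions add up to at least `6`. The complement of a nonzero vector has dimension
at most `4`, and exactly `3` if the vector is not a pure tensor. Since a subspace of dimension at
least `2` never has the same complement as one of its vectors, both dimensions are `3` and `U`
consists of pure tensors, which forces `U = a ⊗ F³`. So the atoms correspond to the `p + 1` lines
in `F²`, and the abelian ones to the lines on which `x² + y²` vanishes, that is, to the square
roots of `-1` in `F`.
-/

section CentralExtension

variable {R V Z : Type*} [CommRing R] [AddCommGroup V] [Module R V] [AddCommGroup Z] [Module R Z]

/-- The number `|U| · |U^⊥|`, the analogue for submodules of the Chermak-Delgado measure, where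
orthogonality is taken with respect to the bilinear map `ω`. -/
noncomputable def orthogonalMeasure (ω : V →ₗ[R] V →ₗ[R] Z) (U : Submodule R V) : ℕ :=
  Nat.card U * Nat.card (U.orthogonalBilin ω)

/-- The central extension of `V` by `Z` with the bilinear map `β` as cocycle: the set `V × Z` with
multiplication `(v, z) (v', z') = (v + v', z + z' + β v v')`. -/
@[ext]
structure CentralExtension (β : V →ₗ[R] V →ₗ[R] Z) where
  /-- The component in the quotient `V`. -/
  base : V
  /-- The component in the central subgroup `Z`. -/
  fiber : Z

namespace CentralExtension

variable (β : V →ₗ[R] V →ₗ[R] Z)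

instance : Mul (CentralExtension β) where
  mul x y := ⟨x.base + y.base, x.fiber + y.fiber + β x.base y.base⟩

instance : One (CentralExtension β) where
  one := ⟨0, 0⟩

instance : Inv (CentralExtension β) where
  inv x := ⟨-x.base, -x.fiber + β x.base x.base⟩

variable {β}

@[simp]
lemma mul_base (x y : CentralExtension β) : (x * y).base = x.base + y.base := rfl

@[simp]
lemma mul_fiber (x y : CentralExtension β) :
    (x * y).fiber = x.fiber + y.fiber + β x.base y.base := rfl

@[simp]
lemma one_base : (1 : CentralExtension β).base = 0 := rfl

@[simp]
lemma one_fiber : (1 : CentralExtension β).fiber = 0 := rfl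

@[simp]
lemma inv_base (x : CentralExtension β) : x⁻¹.base = -x.base := rfl

@[simp]
lemma inv_fiber (x : CentralExtension β) : x⁻¹.fiber = -x.fiber + β x.base x.base := rfl

instance : Group (CentralExtension β) where
  mul_assoc x y z := by
    ext
    · simp [add_assoc]
    · simp only [mul_base, mul_fiber, map_add, LinearMap.add_apply]
      abel
  one_mul x := by ext <;> simp
  mul_one x := by ext <;> simp
  inv_mul_cancel x := by ext <;> simp

variable (β) in
/-- The underlying set of the central extension. -/
def equivProd : CentralExtension β ≃ V × Z where
  toFun x := (x.base, x.fiber)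
  invFun x := ⟨x.1, x.2⟩

instance [Finite V] [Finite Z] : Finite (CentralExtension β) :=
  Finite.of_equiv _ (equivProd β).symm

variable (β) in
/-- The alternating bilinear map induced on `V` by taking commutators in the central extension. -/
def commutatorForm : V →ₗ[R] V →ₗ[R] Z :=
  β - β.flip

lemma mul_comm_iff (x y : CentralExtension β) :
    x * y = y * x ↔ commutatorForm β x.base y.base = 0 := by
  simp [CentralExtension.ext_iff, commutatorForm, sub_eq_zero, add_comm]

variable (β) in
/-- The full preimage in the central extension of a submodule of `V`. -/
def preimage : Submodule R V ↪o Subgroup (CentralExtension β) :=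
  OrderEmbedding.ofMapLEIff
    (fun U ↦
      { carrier := {x | x.base ∈ U}
        mul_mem' := U.add_mem
        one_mem' := U.zero_mem
        inv_mem' := U.neg_mem })
    fun _ _ ↦ ⟨fun h v hv ↦ h (x := ⟨v, 0⟩) hv, fun h _ hx ↦ h hx⟩

@[simp]
lemma mem_preimage {U : Submodule R V} {x : CentralExtension β} :
    x ∈ preimage β U ↔ x.base ∈ U := Iff.rfl

@[simp]
lemma preimage_top : preimage β ⊤ = ⊤ := by
  ext; simp

lemma card_preimage (U : Submodule R V) :
    Nat.card (preimage β U) = Nat.card U * Nat.card Z := by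
  rw [← Nat.card_prod]
  exact Nat.card_congr
    { toFun x := (⟨x.1.base, x.2⟩, x.1.fiber)
      invFun x := ⟨⟨x.1, x.2⟩, x.1.2⟩ }

lemma centralizer_preimage (U : Submodule R V) :
    Subgroup.centralizer (preimage β U : Set (CentralExtension β)) =
      preimage β (U.orthogonalBilin (commutatorForm β)) := by
  ext x
  simp only [Subgroup.mem_centralizer_iff, SetLike.mem_coe, mem_preimage, mul_comm_iff,
    Submodule.mem_orthogonalBilin_iff]
  exact ⟨fun h v hv ↦ h ⟨v, 0⟩ hv, fun h y hy ↦ h _ hy⟩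

lemma center_eq_preimage :
    Subgroup.center (CentralExtension β) =
      preimage β ((⊤ : Submodule R V).orthogonalBilin (commutatorForm β)) := by
  rw [← centralizer_preimage, preimage_top, Subgroup.coe_top, Subgroup.centralizer_univ]

lemma forall_mul_comm_preimage_iff (U : Submodule R V) :
    (∀ x y : preimage β U, x * y = y * x) ↔ U ≤ U.orthogonalBilin (commutatorForm β) := by
  simp only [Subtype.forall, Subtype.ext_iff, Subgroup.coe_mul, mem_preimage, mul_comm_iff]
  exact ⟨fun h v hv u hu ↦ h ⟨u, 0⟩ hu ⟨v, 0⟩ hv, fun h x hx y hy ↦ h hy _ hx⟩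

lemma CDmeasure_preimage (U : Submodule R V) :
    CDmeasure (preimage β U) = orthogonalMeasure (commutatorForm β) U * Nat.card Z ^ 2 := by
  rw [CDmeasure, centralizer_preimage, card_preimage, card_preimage, orthogonalMeasure]
  ring

section ZMod

variable {n : ℕ} [Module (ZMod n) V] [Module (ZMod n) Z] {β : V →ₗ[ZMod n] V →ₗ[ZMod n] Z}

/-- The image in `V` of a subgroup of the central extension. Scalars are restricted to `ZMod n`,
over which every additive subgroup is a submodule. -/
def image (H : Subgroup (CentralExtension β)) : Submodule (ZMod n) V :=
  AddSubgroup.toZModSubmodule n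
    { carrier := base '' (H : Set (CentralExtension β))
      add_mem' := by
        rintro _ _ ⟨x, hx, rfl⟩ ⟨y, hy, rfl⟩
        exact ⟨x * y, H.mul_mem hx hy, rfl⟩
      zero_mem' := ⟨1, H.one_mem, rfl⟩
      neg_mem' := by
        rintro _ ⟨x, hx, rfl⟩
        exact ⟨x⁻¹, H.inv_mem hx, rfl⟩ }

lemma mem_image {H : Subgroup (CentralExtension β)} {v : V} :
    v ∈ image H ↔ ∃ x ∈ H, x.base = v := Iff.rfl

lemma le_preimage_image (H : Subgroup (CentralExtension β)) : H ≤ preimage β (image H) :=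
  fun x hx ↦ mem_image.2 ⟨x, hx, rfl⟩

lemma centralizer_preimage_image (H : Subgroup (CentralExtension β)) :
    Subgroup.centralizer (preimage β (image H) : Set (CentralExtension β)) =
      Subgroup.centralizer H := by
  refine le_antisymm (Subgroup.centralizer_le (le_preimage_image H)) fun x hx ↦ ?_
  rw [Subgroup.mem_centralizer_iff] at hx ⊢
  rintro y ⟨w, hw, hwy⟩
  rw [mul_comm_iff, ← hwy, ← mul_comm_iff]
  exact hx w hw

variable [Finite V] [Finite Z]

lemma CDmeasure_le_preimage_image (H : Subgroup (CentralExtension β)) :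
    CDmeasure H ≤ CDmeasure (preimage β (image H)) := by
  rw [CDmeasure, CDmeasure, centralizer_preimage_image]
  exact Nat.mul_le_mul_right _ (Subgroup.card_le_of_le (le_preimage_image H))

lemma eq_preimage_image_of_inCD {H : Subgroup (CentralExtension β)} (hH : inCD H) :
    H = preimage β (image H) := by
  refine Subgroup.eq_of_le_of_card_ge (le_preimage_image H) ?_
  have hle := hH (preimage β (image H))
  rw [CDmeasure, CDmeasure, centralizer_preimage_image] at hle
  exact Nat.le_of_mul_le_mul_right hle Nat.card_pos

theorem inCD_iff_exists_preimage (H : Subgroup (CentralExtension β)) :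
    inCD H ↔ ∃ U, H = preimage β U ∧ ∀ T, orthogonalMeasure (commutatorForm β) T ≤
      orthogonalMeasure (commutatorForm β) U := by
  have measure_le_iff (T U : Submodule (ZMod n) V) :
      CDmeasure (preimage β T) ≤ CDmeasure (preimage β U) ↔
        orthogonalMeasure (commutatorForm β) T ≤ orthogonalMeasure (commutatorForm β) U := by
    rw [CDmeasure_preimage, CDmeasure_preimage,
      Nat.mul_le_mul_right_iff (pow_pos Nat.card_pos 2)]
  constructor
  · intro hH
    have hHU := eq_preimage_image_of_inCD hH
    exact ⟨image H, hHU, fun T ↦ (measure_le_iff T _).1 (hHU ▸ hH (preimage β T))⟩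
  · rintro ⟨U, rfl, hU⟩ K
    exact (CDmeasure_le_preimage_image K).trans ((measure_le_iff _ _).2 (hU _))

end ZMod

end CentralExtension

end CentralExtension

section PureTensor

open Module
open scoped LinearAlgebra.Projectivization

section CommRing

variable {R W : Type*} [CommRing R] [AddCommGroup W] [Module R W]

/-- The pure tensor `a ⊗ w` of `R² ⊗ W`, which is identified with `W × W`. -/
def pureTensor : R × R →ₗ[R] W →ₗ[R] W × W :=
  LinearMap.mk₂ R (fun a w ↦ (a.1 • w, a.2 • w))
    (fun a b w ↦ by ext1 <;> simp [add_smul]) (fun c a w ↦ by ext1 <;> simp [mul_smul])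
    (fun a w y ↦ by ext1 <;> simp) (fun c a w ↦ by ext1 <;> simp [smul_comm c])

lemma pureTensor_apply (a : R × R) (w : W) : pureTensor a w = (a.1 • w, a.2 • w) := rfl

/-- The submodule `a ⊗ W` of `R² ⊗ W`. -/
def lineTensor (a : R × R) : Submodule R (W × W) :=
  LinearMap.range (pureTensor a)

lemma pureTensor_mem_lineTensor (a : R × R) (w : W) : pureTensor a w ∈ lineTensor a :=
  LinearMap.mem_range_self _ w

end CommRing

variable {F W : Type*} [Field F] [AddCommGroup W] [Module F W]

lemma exists_eq_smul_of_mul_eq_mul {a b : F × F} (ha : a ≠ 0) (h : a.1 * b.2 = a.2 * b.1) :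
    ∃ c : F, b = c • a := by
  by_cases ha₁ : a.1 = 0
  · have ha₂ : a.2 ≠ 0 := fun ha₂ ↦ ha (Prod.ext ha₁ ha₂)
    refine ⟨b.2 / a.2, Prod.ext ?_ ?_⟩
    · simpa [ha₁, ha₂] using h
    · simp [ha₂]
  · refine ⟨b.1 / a.1, Prod.ext ?_ ?_⟩
    · simp [ha₁]
    · simp only [Prod.smul_snd, smul_eq_mul]
      field_simp
      linear_combination h

lemma pureTensor_injective {a : F × F} (ha : a ≠ 0) :
    Function.Injective (pureTensor (W := W) a) := by
  rw [← LinearMap.ker_eq_bot, LinearMap.ker_eq_bot']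
  intro w hw
  simp only [pureTensor_apply, Prod.mk_eq_zero, smul_eq_zero] at hw
  by_contra hw₀
  exact ha (Prod.ext (hw.1.resolve_right hw₀) (hw.2.resolve_right hw₀))

lemma mem_lineTensor_iff {a : F × F} (ha : a ≠ 0) {u : W × W} :
    u ∈ lineTensor a ↔ a.1 • u.2 = a.2 • u.1 := by
  constructor
  · rintro ⟨w, rfl⟩
    exact smul_comm ..
  · intro h
    by_cases ha₁ : a.1 = 0
    · have ha₂ : a.2 ≠ 0 := fun ha₂ ↦ ha (Prod.ext ha₁ ha₂)
      refine ⟨a.2⁻¹ • u.2, Prod.ext ?_ ?_⟩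
      · simpa [pureTensor_apply, ha₁, ha₂, eq_comm] using h
      · simp [pureTensor_apply, ha₂]
    · refine ⟨a.1⁻¹ • u.1, Prod.ext ?_ ?_⟩
      · simp [pureTensor_apply, ha₁]
      · simp [pureTensor_apply, ← h, ha₁]

lemma finrank_lineTensor {a : F × F} (ha : a ≠ 0) :
    finrank F (lineTensor (W := W) a) = finrank F W :=
  LinearMap.finrank_range_of_inj (pureTensor_injective ha)

lemma lineTensor_eq_of_le [FiniteDimensional F W] {a b : F × F} (ha : a ≠ 0) (hb : b ≠ 0)
    (h : lineTensor (W := W) a ≤ lineTensor b) : lineTensor (W := W) a = lineTensor b :=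
  Submodule.eq_of_le_of_finrank_eq h ((finrank_lineTensor ha).trans (finrank_lineTensor hb).symm)

lemma lineTensor_smul {c : F} (hc : c ≠ 0) (a : F × F) :
    lineTensor (W := W) (c • a) = lineTensor a := by
  rw [lineTensor, map_smul, LinearMap.range_smul _ _ hc, lineTensor]

lemma exists_eq_smul_of_lineTensor_eq [Nontrivial W] {a b : F × F} (ha : a ≠ 0)
    (h : lineTensor (W := W) a = lineTensor b) : ∃ c : F, b = c • a := by
  obtain ⟨w, hw⟩ := exists_ne (0 : W)
  have hmem := (mem_lineTensor_iff ha).1 (h ▸ pureTensor_mem_lineTensor b w)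
  simp only [pureTensor_apply, smul_smul] at hmem
  exact exists_eq_smul_of_mul_eq_mul ha (smul_left_injective F hw hmem)

lemma ncard_setOf_lineTensor [Finite F] [Nontrivial W] :
    {U : Submodule F (W × W) | ∃ a : F × F, a ≠ 0 ∧ U = lineTensor a}.ncard = Nat.card F + 1 := by
  have hrange : {U : Submodule F (W × W) | ∃ a : F × F, a ≠ 0 ∧ U = lineTensor a} =
      Set.range fun ℓ : ℙ F (F × F) ↦ lineTensor ℓ.rep := by
    ext U
    constructor
    · rintro ⟨a, ha, rfl⟩
      obtain ⟨c, hc⟩ := Projectivization.exists_smul_eq_mk_rep F a ha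
      exact ⟨.mk F a ha, (congrArg lineTensor hc.symm).trans (lineTensor_smul c.ne_zero a)⟩
    · rintro ⟨ℓ, rfl⟩
      exact ⟨ℓ.rep, ℓ.rep_nonzero, rfl⟩
  have hinj : Function.Injective fun ℓ : ℙ F (F × F) ↦ lineTensor (W := W) ℓ.rep := by
    intro ℓ m h
    obtain ⟨c, hc⟩ := exists_eq_smul_of_lineTensor_eq m.rep_nonzero h.symm
    rw [← ℓ.mk_rep, ← m.mk_rep, Projectivization.mk_eq_mk_iff']
    exact ⟨c, hc.symm⟩
  rw [hrange, ← Set.image_univ, Set.ncard_image_of_injective _ hinj, Set.ncard_univ,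
    Projectivization.card_of_finrank_two F _ (by simp)]

lemma ncard_setOf_isotropic_lineTensor [Nontrivial W] :
    {U : Submodule F (W × W) |
      ∃ a : F × F, a ≠ 0 ∧ a.1 ^ 2 + a.2 ^ 2 = 0 ∧ U = lineTensor a}.ncard =
      {s : F | s ^ 2 = -1}.ncard := by
  have hinj : Function.Injective fun s : F ↦ lineTensor (W := W) ((1, s) : F × F) := by
    intro s t h
    obtain ⟨c, hc⟩ := exists_eq_smul_of_lineTensor_eq (by simp) h
    simp only [Prod.ext_iff, Prod.smul_fst, Prod.smul_snd, smul_eq_mul, mul_one] at hc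
    rw [hc.2, ← hc.1, one_mul]
  rw [← Set.ncard_image_of_injective _ hinj]
  congr 1
  ext U
  constructor
  · rintro ⟨⟨a₁, a₂⟩, ha, hsum, rfl⟩
    have ha₁ : a₁ ≠ 0 := by
      rintro rfl
      simp_all
    refine ⟨a₂ / a₁, ?_, ?_⟩
    · have : a₂ ^ 2 = -a₁ ^ 2 := by linear_combination hsum
      simp [div_pow, this, ha₁]
    · simpa [ha₁, mul_div_cancel₀] using
        (lineTensor_smul (W := W) ha₁ ((1, a₂ / a₁) : F × F)).symm
  · rintro ⟨s, hs, rfl⟩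
    exact ⟨(1, s), by simp, by simp [show s ^ 2 = -1 from hs], rfl⟩

end PureTensor

section CrossForm

open Module Matrix

section CommRing

variable {R : Type*} [CommRing R]

lemma cross_eq_zero_comm {w x : Fin 3 → R} : w ⨯₃ x = 0 ↔ x ⨯₃ w = 0 := by
  rw [← cross_anticomm, neg_eq_zero]

lemma eq_zero_of_forall_cross_eq_zero {z : Fin 3 → R} (h : ∀ x, x ⨯₃ z = 0) : z = 0 := by
  have h₀ := h ![1, 0, 0]
  have h₁ := h ![0, 1, 0]
  simp only [cross_apply] at h₀ h₁
  ext i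
  fin_cases i <;> simp_all

lemma cross_eq_zero_of_forall_dot {z w : Fin 3 → R} (h : ∀ x, z ⬝ᵥ w ⨯₃ x = 0) : z ⨯₃ w = 0 :=
  dotProduct_eq_zero _ fun x ↦ by
    rw [dotProduct_comm, triple_product_permutation, h]

/-- The alternating map `(u, v) ↦ u₁ × v₁ + u₂ × v₂` on `R² ⊗ R³`, which is the tensor product of
the standard symmetric form on `R²` with the cross product. -/
def crossForm : (Fin 3 → R) × (Fin 3 → R) →ₗ[R] (Fin 3 → R) × (Fin 3 → R) →ₗ[R] Fin 3 → R :=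
  crossProduct.compl₁₂ (.fst R _ _) (.fst R _ _) + crossProduct.compl₁₂ (.snd R _ _) (.snd R _ _)

lemma crossForm_apply (u v : (Fin 3 → R) × (Fin 3 → R)) :
    crossForm u v = u.1 ⨯₃ v.1 + u.2 ⨯₃ v.2 := rfl

lemma crossForm_isAlt : (crossForm (R := R)).IsAlt := fun u ↦ by
  simp [crossForm_apply]

lemma crossForm_pureTensor (a : R × R) (w : Fin 3 → R) (v : (Fin 3 → R) × (Fin 3 → R)) :
    crossForm (pureTensor a w) v = w ⨯₃ (a.1 • v.1 + a.2 • v.2) := by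
  simp [crossForm_apply, pureTensor_apply]

lemma crossForm_pureTensor_pureTensor (a b : R × R) (w x : Fin 3 → R) :
    crossForm (pureTensor a w) (pureTensor b x) = (a.1 * b.1 + a.2 * b.2) • w ⨯₃ x := by
  rw [crossForm_pureTensor, pureTensor_apply, smul_smul, smul_smul, ← add_smul, map_smul]

lemma orthogonal_top : (⊤ : Submodule R _).orthogonalBilin crossForm = ⊥ := by
  rw [eq_bot_iff]
  intro v hv
  refine Prod.ext (eq_zero_of_forall_cross_eq_zero fun x ↦ ?_)
    (eq_zero_of_forall_cross_eq_zero fun x ↦ ?_)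
  · simpa [crossForm_apply] using hv (x, 0) trivial
  · simpa [crossForm_apply] using hv (0, x) trivial

lemma orthogonal_bot : (⊥ : Submodule R _).orthogonalBilin crossForm = ⊤ := by
  ext v
  simp

lemma lineTensor_le_orthogonal_iff (a : R × R) :
    lineTensor a ≤ (lineTensor a).orthogonalBilin crossForm ↔ a.1 ^ 2 + a.2 ^ 2 = 0 := by
  constructor
  · intro h
    have hcross := h (pureTensor_mem_lineTensor a ![0, 1, 0]) _
      (pureTensor_mem_lineTensor a ![1, 0, 0])
    rw [crossForm_pureTensor_pureTensor] at hcross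
    simpa [cross_apply, sq] using congrFun hcross 2
  · rintro h _ ⟨w, rfl⟩ _ ⟨x, rfl⟩
    rw [crossForm_pureTensor_pureTensor, ← sq, ← sq, h, zero_smul]

lemma range_crossForm (u : (Fin 3 → R) × (Fin 3 → R)) :
    LinearMap.range (crossForm u) =
      LinearMap.range (crossProduct u.1) ⊔ LinearMap.range (crossProduct u.2) := by
  rw [← LinearMap.range_coprod]
  rfl

end CommRing

variable {F : Type*} [Field F]

lemma exists_eq_smul_of_cross_eq_zero {w x : Fin 3 → F} (hw : w ≠ 0) (h : w ⨯₃ x = 0) :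
    ∃ c : F, x = c • w := by
  by_contra! hc
  exact crossProduct_ne_zero_iff_linearIndependent.2
    ((LinearIndependent.pair_iff' hw).2 fun c hcx ↦ hc c hcx.symm) h

lemma two_le_finrank_range_cross {z : Fin 3 → F} (hz : z ≠ 0) :
    2 ≤ finrank F (LinearMap.range (crossProduct z)) := by
  have hker : LinearMap.ker (crossProduct z) ≤ F ∙ z := by
    intro x hx
    obtain ⟨c, rfl⟩ := exists_eq_smul_of_cross_eq_zero hz hx
    exact Submodule.smul_mem _ _ (Submodule.mem_span_singleton_self z)
  have hker_finrank := Submodule.finrank_mono hker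
  have hrank := LinearMap.finrank_range_add_finrank_ker (crossProduct z)
  rw [finrank_span_singleton hz] at hker_finrank
  rw [finrank_fin_fun] at hrank
  lia

lemma range_cross_sup_range_cross_eq_top {w x : Fin 3 → F} (h : w ⨯₃ x ≠ 0) :
    LinearMap.range (crossProduct w) ⊔ LinearMap.range (crossProduct x) = ⊤ := by
  by_contra hne
  obtain ⟨f, hf, hle⟩ := Submodule.exists_le_ker_of_lt_top _ (lt_top_iff_ne_top.2 hne)
  obtain ⟨z, rfl⟩ := (dotProductEquiv F (Fin 3)).surjective f
  have hz : z ≠ 0 := by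
    rintro rfl
    exact hf (map_zero _)
  obtain ⟨hw, hx⟩ := sup_le_iff.1 hle
  obtain ⟨c, rfl⟩ := exists_eq_smul_of_cross_eq_zero hz
    (cross_eq_zero_of_forall_dot fun y ↦ hw (LinearMap.mem_range_self _ y))
  obtain ⟨d, rfl⟩ := exists_eq_smul_of_cross_eq_zero hz
    (cross_eq_zero_of_forall_dot fun y ↦ hx (LinearMap.mem_range_self _ y))
  simp at h

lemma orthogonal_lineTensor {a : F × F} (ha : a ≠ 0) :
    (lineTensor a).orthogonalBilin crossForm = lineTensor (-a.2, a.1) := by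
  have ha' : (-a.2, a.1) ≠ 0 := fun h ↦ ha (by simp_all [Prod.ext_iff])
  ext v
  have hmem : v ∈ lineTensor (-a.2, a.1) ↔ a.1 • v.1 + a.2 • v.2 = 0 := by
    rw [mem_lineTensor_iff ha', neg_smul, neg_eq_iff_add_eq_zero, add_comm]
  rw [hmem, Submodule.mem_orthogonalBilin_iff]
  constructor
  · intro h
    refine eq_zero_of_forall_cross_eq_zero fun w ↦ ?_
    rw [← crossForm_pureTensor]
    exact h _ (pureTensor_mem_lineTensor a w)
  · rintro h _ ⟨w, rfl⟩
    rw [crossForm_pureTensor, h, map_zero]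

lemma exists_eq_pureTensor_of_cross_eq_zero {u : (Fin 3 → F) × (Fin 3 → F)}
    (h : u.1 ⨯₃ u.2 = 0) : ∃ (a : F × F) (w : Fin 3 → F), u = pureTensor a w := by
  by_cases h₁ : u.1 = 0
  · exact ⟨(0, 1), u.2, by ext1 <;> simp [pureTensor_apply, h₁]⟩
  · obtain ⟨c, hc⟩ := exists_eq_smul_of_cross_eq_zero h₁ h
    exact ⟨(1, c), u.1, by ext1 <;> simp [pureTensor_apply, hc]⟩

lemma finrank_range_add_finrank_ker_crossForm (u : (Fin 3 → F) × (Fin 3 → F)) :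
    finrank F (LinearMap.range (crossForm u)) + finrank F (LinearMap.ker (crossForm u)) = 6 := by
  rw [LinearMap.finrank_range_add_finrank_ker]
  simp

lemma finrank_ker_crossForm_le_four {u : (Fin 3 → F) × (Fin 3 → F)} (hu : u ≠ 0) :
    finrank F (LinearMap.ker (crossForm u)) ≤ 4 := by
  have hrange : 2 ≤ finrank F (LinearMap.range (crossForm u)) := by
    rw [range_crossForm]
    by_cases h₁ : u.1 = 0
    · have h₂ : u.2 ≠ 0 := fun h₂ ↦ hu (Prod.ext h₁ h₂)
      exact (two_le_finrank_range_cross h₂).trans (Submodule.finrank_mono le_sup_right)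
    · exact (two_le_finrank_range_cross h₁).trans (Submodule.finrank_mono le_sup_left)
  have hsum := finrank_range_add_finrank_ker_crossForm u
  lia

lemma finrank_ker_crossForm_eq_three {u : (Fin 3 → F) × (Fin 3 → F)} (h : u.1 ⨯₃ u.2 ≠ 0) :
    finrank F (LinearMap.ker (crossForm u)) = 3 := by
  have hsum := finrank_range_add_finrank_ker_crossForm u
  rw [range_crossForm, range_cross_sup_range_cross_eq_top h, finrank_top, finrank_fin_fun] at hsum
  lia

lemma mem_span_of_mem_orthogonal_ker_pureTensor {a : F × F} {w : Fin 3 → F}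
    {x : (Fin 3 → F) × (Fin 3 → F)} (ha : a ≠ 0) (hw : w ≠ 0)
    (hx : x ∈ (LinearMap.ker (crossForm (pureTensor a w))).orthogonalBilin crossForm) :
    x ∈ F ∙ pureTensor a w := by
  have cross_eq_zero (b : F × F) : w ⨯₃ (b.1 • x.1 + b.2 • x.2) = 0 := by
    rw [← crossForm_pureTensor]
    exact hx _ (by simp [crossForm_pureTensor_pureTensor])
  obtain ⟨c₁, hc₁⟩ := exists_eq_smul_of_cross_eq_zero hw (by simpa using cross_eq_zero (1, 0))
  obtain ⟨c₂, hc₂⟩ := exists_eq_smul_of_cross_eq_zero hw (by simpa using cross_eq_zero (0, 1))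
  obtain rfl : x = pureTensor (c₁, c₂) w := Prod.ext hc₁ hc₂
  have hdet (y : Fin 3 → F) : y ⨯₃ ((a.2 * c₁ - a.1 * c₂) • w) = 0 := by
    have := hx (pureTensor (a.2, -a.1) y) (by simp [crossForm_pureTensor_pureTensor, mul_comm])
    simpa [crossForm_pureTensor_pureTensor, sub_eq_add_neg] using this
  have hdet₀ := (smul_eq_zero.1 (eq_zero_of_forall_cross_eq_zero hdet)).resolve_right hw
  obtain ⟨k, hk⟩ := exists_eq_smul_of_mul_eq_mul (b := (c₁, c₂)) ha (sub_eq_zero.1 hdet₀).symm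
  exact Submodule.mem_span_singleton.2 ⟨k, by simp [hk]⟩

lemma mem_span_of_mem_orthogonal_ker_of_cross_ne_zero {u x : (Fin 3 → F) × (Fin 3 → F)}
    (hu : u.1 ⨯₃ u.2 ≠ 0)
    (hx : x ∈ (LinearMap.ker (crossForm u)).orthogonalBilin crossForm) : x ∈ F ∙ u := by
  have hu₁ : u.1 ≠ 0 := fun h ↦ hu (by simp [h])
  have hu₂ : u.2 ≠ 0 := fun h ↦ hu (by simp [h])
  have h₁ := hx (u.1, 0) (by simp [crossForm_apply])
  have h₂ := hx (0, u.2) (by simp [crossForm_apply])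
  have h₃ := hx (u.2, u.1) (by simp [crossForm_apply])
  obtain ⟨c, hc⟩ := exists_eq_smul_of_cross_eq_zero hu₁ (by simpa [crossForm_apply] using h₁)
  obtain ⟨d, hd⟩ := exists_eq_smul_of_cross_eq_zero hu₂ (by simpa [crossForm_apply] using h₂)
  have hcd : (d - c) • u.1 ⨯₃ u.2 = 0 := by
    rw [← h₃, crossForm_apply, hc, hd, map_smul, map_smul, ← cross_anticomm u.1 u.2]
    module
  obtain rfl := sub_eq_zero.1 ((smul_eq_zero.1 hcd).resolve_right hu)
  exact Submodule.mem_span_singleton.2 ⟨d, Prod.ext hc.symm hd.symm⟩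

lemma orthogonal_ker_crossForm_le_span {u : (Fin 3 → F) × (Fin 3 → F)} (hu : u ≠ 0) :
    (LinearMap.ker (crossForm u)).orthogonalBilin crossForm ≤ F ∙ u := by
  intro x hx
  by_cases h : u.1 ⨯₃ u.2 = 0
  · obtain ⟨a, w, rfl⟩ := exists_eq_pureTensor_of_cross_eq_zero h
    exact mem_span_of_mem_orthogonal_ker_pureTensor (by rintro rfl; simp at hu)
      (by rintro rfl; simp at hu) hx
  · exact mem_span_of_mem_orthogonal_ker_of_cross_ne_zero h hx

lemma finrank_lt_finrank_ker_crossForm {U T : Submodule F ((Fin 3 → F) × (Fin 3 → F))}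
    {u : (Fin 3 → F) × (Fin 3 → F)} (hu : u ≠ 0) (huU : u ∈ U) (hU : 2 ≤ finrank F U)
    (hT : T ≤ U.orthogonalBilin crossForm) :
    finrank F T < finrank F (LinearMap.ker (crossForm u)) := by
  have hTker : T ≤ LinearMap.ker (crossForm u) := fun t ht ↦ hT ht u huU
  refine Submodule.finrank_lt_finrank_of_lt (lt_of_le_of_ne hTker ?_)
  rintro rfl
  have hUspan : U ≤ F ∙ u :=
    (Submodule.le_orthogonalBilin_orthogonalBilin crossForm_isAlt.isRefl).trans
      ((Submodule.orthogonalBilin_le hT).trans (orthogonal_ker_crossForm_le_span hu))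
  have := (Submodule.finrank_mono hUspan).trans_eq (finrank_span_singleton hu)
  lia

lemma mul_eq_mul_or_cross_eq_zero {U : Submodule F ((Fin 3 → F) × (Fin 3 → F))}
    (hU : ∀ u ∈ U, u.1 ⨯₃ u.2 = 0) {a b : F × F} {w x : Fin 3 → F}
    (hw : pureTensor a w ∈ U) (hx : pureTensor b x ∈ U) :
    a.1 * b.2 = a.2 * b.1 ∨ w ⨯₃ x = 0 := by
  have hadd := hU _ (U.add_mem hw hx)
  have hcross : (a.1 * b.2 - a.2 * b.1) • w ⨯₃ x = 0 := by
    rw [← hadd]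
    simp only [pureTensor_apply, Prod.mk_add_mk, map_add, map_smul, LinearMap.add_apply,
      LinearMap.smul_apply, cross_self, ← cross_anticomm w x]
    module
  exact (smul_eq_zero.1 hcross).imp_left sub_eq_zero.1

lemma exists_pureTensor_mem_cross_ne_zero {U : Submodule F ((Fin 3 → F) × (Fin 3 → F))}
    (hU : ∀ u ∈ U, u.1 ⨯₃ u.2 = 0) (hdim : 3 ≤ finrank F U) :
    ∃ (a : F × F) (w x : Fin 3 → F),
      a ≠ 0 ∧ pureTensor a w ∈ U ∧ pureTensor a x ∈ U ∧ w ⨯₃ x ≠ 0 := by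
  have hbot : U ≠ ⊥ := by
    rintro rfl
    simp at hdim
  obtain ⟨u, huU, hu⟩ := Submodule.exists_mem_ne_zero_of_ne_bot hbot
  obtain ⟨a, w, rfl⟩ := exists_eq_pureTensor_of_cross_eq_zero (hU u huU)
  have hw : w ≠ 0 := by
    rintro rfl
    simp at hu
  -- `F² ⊗ w` is at most two-dimensional, so it does not contain `U`.
  have hnot : ¬ U ≤ LinearMap.range ((pureTensor (R := F)).flip w) := fun hle ↦ by
    have hrange := LinearMap.finrank_range_le ((pureTensor (R := F)).flip w)
    have := (Submodule.finrank_mono hle).trans hrange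
    simp at this
    lia
  obtain ⟨v, hvU, hv⟩ := SetLike.not_le_iff_exists.1 hnot
  obtain ⟨b, x, rfl⟩ := exists_eq_pureTensor_of_cross_eq_zero (hU v hvU)
  have hwx : w ⨯₃ x ≠ 0 := fun h ↦ by
    obtain ⟨c, rfl⟩ := exists_eq_smul_of_cross_eq_zero hw h
    exact hv ⟨c • b, by simp⟩
  have hb : b ≠ 0 := by
    rintro rfl
    simp at hv
  have hab := (mul_eq_mul_or_cross_eq_zero hU hvU huU).resolve_right (mt cross_eq_zero_comm.1 hwx)
  obtain ⟨c, rfl⟩ := exists_eq_smul_of_mul_eq_mul hb hab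
  have hc : c ≠ 0 := by
    rintro rfl
    simp at hu
  exact ⟨b, w, x, hb, by simpa [Submodule.smul_mem_iff _ hc] using huU, hvU, hwx⟩

lemma exists_le_lineTensor {U : Submodule F ((Fin 3 → F) × (Fin 3 → F))}
    (hU : ∀ u ∈ U, u.1 ⨯₃ u.2 = 0) (hdim : 3 ≤ finrank F U) :
    ∃ a : F × F, a ≠ 0 ∧ U ≤ lineTensor a := by
  obtain ⟨a, w, x, ha, hw, hx, hwx⟩ := exists_pureTensor_mem_cross_ne_zero hU hdim
  refine ⟨a, ha, fun u huU ↦ ?_⟩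
  obtain ⟨b, y, rfl⟩ := exists_eq_pureTensor_of_cross_eq_zero (hU u huU)
  by_cases hab : a.1 * b.2 = a.2 * b.1
  · rw [mem_lineTensor_iff ha, pureTensor_apply, smul_smul, smul_smul, hab]
  · have hwy := (mul_eq_mul_or_cross_eq_zero hU hw huU).resolve_left hab
    have hxy := (mul_eq_mul_or_cross_eq_zero hU hx huU).resolve_left hab
    have hw₀ : w ≠ 0 := fun h ↦ hwx (by simp [h])
    obtain ⟨c, rfl⟩ := exists_eq_smul_of_cross_eq_zero hw₀ hwy
    rw [cross_eq_zero_comm, map_smul, LinearMap.smul_apply, smul_eq_zero] at hxy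
    simp [hxy.resolve_right hwx]

/-- The subspaces `0`, `F² ⊗ F³` and `a ⊗ F³` of `F² ⊗ F³`, where `a ≠ 0`. They turn out to be the
subspaces of maximal measure with respect to `crossForm`. -/
def IsDecomposable (U : Submodule F ((Fin 3 → F) × (Fin 3 → F))) : Prop :=
  U = ⊥ ∨ U = ⊤ ∨ ∃ a : F × F, a ≠ 0 ∧ U = lineTensor a

lemma IsDecomposable.finrank_add_finrank_orthogonal
    {U : Submodule F ((Fin 3 → F) × (Fin 3 → F))} (hU : IsDecomposable U) :
    finrank F U + finrank F (U.orthogonalBilin crossForm) = 6 := by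
  rcases hU with rfl | rfl | ⟨a, ha, rfl⟩
  · rw [orthogonal_bot, finrank_bot, finrank_top]
    simp
  · rw [orthogonal_top, finrank_bot, finrank_top]
    simp
  · have ha' : (-a.2, a.1) ≠ 0 := fun h ↦ ha (by simp_all [Prod.ext_iff])
    rw [orthogonal_lineTensor ha, finrank_lineTensor ha, finrank_lineTensor ha', finrank_fin_fun]

lemma isDecomposable_of_six_le {U T : Submodule F ((Fin 3 → F) × (Fin 3 → F))}
    (hT : T ≤ U.orthogonalBilin crossForm) (hdim : 6 ≤ finrank F U + finrank F T) :
    IsDecomposable U := by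
  have hU : U ≤ T.orthogonalBilin crossForm :=
    (Submodule.le_orthogonalBilin_orthogonalBilin crossForm_isAlt.isRefl).trans
      (Submodule.orthogonalBilin_le hT)
  rcases eq_or_ne U ⊥ with hU_bot | hU_bot
  · exact .inl hU_bot
  rcases eq_or_ne T ⊥ with rfl | hT_bot
  · refine .inr (.inl (Submodule.eq_top_of_finrank_eq (le_antisymm U.finrank_le ?_)))
    simpa using hdim
  obtain ⟨u, huU, hu⟩ := Submodule.exists_mem_ne_zero_of_ne_bot hU_bot
  obtain ⟨t, htT, ht⟩ := Submodule.exists_mem_ne_zero_of_ne_bot hT_bot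
  have hTker : T ≤ LinearMap.ker (crossForm u) := fun x hx ↦ hT hx u huU
  have hUker : U ≤ LinearMap.ker (crossForm t) := fun x hx ↦ hU hx t htT
  have hT_le := (Submodule.finrank_mono hTker).trans (finrank_ker_crossForm_le_four hu)
  have hU_le := (Submodule.finrank_mono hUker).trans (finrank_ker_crossForm_le_four ht)
  have hT_lt := (finrank_lt_finrank_ker_crossForm hu huU (by lia) hT).trans_le
    (finrank_ker_crossForm_le_four hu)
  have hU_lt := (finrank_lt_finrank_ker_crossForm ht htT (by lia) hU).trans_le
    (finrank_ker_crossForm_le_four ht)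
  have hrank (v) (hv : v ∈ U) : v.1 ⨯₃ v.2 = 0 := by
    by_contra h
    have hv₀ : v ≠ 0 := fun h₀ ↦ h (by simp [h₀])
    have := finrank_lt_finrank_ker_crossForm hv₀ hv (by lia) hT
    rw [finrank_ker_crossForm_eq_three h] at this
    lia
  obtain ⟨a, ha, hle⟩ := exists_le_lineTensor hrank (by lia)
  refine .inr (.inr ⟨a, ha, Submodule.eq_of_le_of_finrank_le hle ?_⟩)
  rw [finrank_lineTensor ha, finrank_fin_fun]
  lia

lemma orthogonalMeasure_crossForm [Finite F] (U : Submodule F ((Fin 3 → F) × (Fin 3 → F))) :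
    orthogonalMeasure (crossForm (R := F)) U =
      Nat.card F ^ (finrank F U + finrank F (U.orthogonalBilin crossForm)) := by
  rw [orthogonalMeasure, natCard_eq_pow_finrank (K := F) (V := U),
    natCard_eq_pow_finrank (K := F) (V := U.orthogonalBilin crossForm), pow_add]

theorem forall_orthogonalMeasure_le_iff_isDecomposable [Finite F]
    (U : Submodule F ((Fin 3 → F) × (Fin 3 → F))) :
    (∀ T, orthogonalMeasure (crossForm (R := F)) T ≤ orthogonalMeasure (crossForm (R := F)) U) ↔
      IsDecomposable U := by
  simp only [orthogonalMeasure_crossForm, Nat.pow_le_pow_iff_right Finite.one_lt_card]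
  constructor
  · intro h
    refine isDecomposable_of_six_le le_rfl (le_of_eq_of_le ?_ (h ⊤))
    rw [IsDecomposable.finrank_add_finrank_orthogonal (.inr (.inl rfl))]
  · intro hU T
    rw [hU.finrank_add_finrank_orthogonal]
    by_contra! hT
    exact hT.ne' (isDecomposable_of_six_le le_rfl hT.le).finrank_add_finrank_orthogonal

end CrossForm

section CrossGroup

open Module CentralExtension

section CommRing

variable {R : Type*} [CommRing R]

/-- Half of the cross product: subtracting its transpose yields the cross product, even if
`2` is not invertible. -/
def halfCross : (Fin 3 → R) →ₗ[R] (Fin 3 → R) →ₗ[R] Fin 3 → R :=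
  LinearMap.mk₂ R (fun x y ↦ ![x 1 * y 2, x 2 * y 0, x 0 * y 1])
    (fun x x' y ↦ by simp [add_mul]) (fun c x y ↦ by simp [mul_assoc])
    (fun x y y' ↦ by simp [mul_add]) (fun c x y ↦ by simp [mul_left_comm])

/-- A bilinear cocycle on `R² ⊗ R³` whose commutator form is `crossForm`. -/
def crossCocycle :
    (Fin 3 → R) × (Fin 3 → R) →ₗ[R] (Fin 3 → R) × (Fin 3 → R) →ₗ[R] Fin 3 → R :=
  halfCross.compl₁₂ (.fst R _ _) (.fst R _ _) + halfCross.compl₁₂ (.snd R _ _) (.snd R _ _)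

lemma commutatorForm_crossCocycle :
    commutatorForm (crossCocycle (R := R)) = crossForm := by
  refine LinearMap.ext₂ fun u v ↦ ?_
  ext i
  fin_cases i <;>
    simp [commutatorForm, crossCocycle, halfCross, crossForm_apply, cross_apply] <;> ring

end CommRing

/-- The central extension of `F² ⊗ F³` by `F³` with cocycle `crossCocycle`, for `F = ZMod p`. It is
the group of order `p ^ 9` that realizes the theorem. -/
abbrev CrossGroup (p : ℕ) : Type :=
  CentralExtension (crossCocycle (R := ZMod p))

namespace CrossGroup

variable {p : ℕ}

lemma natCard_eq : Nat.card (CrossGroup p) = p ^ 9 := by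
  simp only [Nat.card_congr (equivProd _), Nat.card_prod, Nat.card_fun, Nat.card_zmod,
    Nat.card_fin]
  ring

lemma center_eq_preimage_bot : Subgroup.center (CrossGroup p) = preimage _ ⊥ := by
  rw [center_eq_preimage, commutatorForm_crossCocycle, orthogonal_top]

variable [Fact p.Prime]

lemma inCD_iff {H : Subgroup (CrossGroup p)} :
    inCD H ↔ ∃ U, IsDecomposable U ∧ H = preimage _ U := by
  rw [inCD_iff_exists_preimage]
  simp only [commutatorForm_crossCocycle, forall_orthogonalMeasure_le_iff_isDecomposable, and_comm]

lemma inCD_top : inCD (⊤ : Subgroup (CrossGroup p)) :=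
  inCD_iff.2 ⟨⊤, .inr (.inl rfl), preimage_top.symm⟩

lemma inCD_center : inCD (Subgroup.center (CrossGroup p)) :=
  inCD_iff.2 ⟨⊥, .inl rfl, center_eq_preimage_bot⟩

lemma center_le_of_inCD {H : Subgroup (CrossGroup p)} (hH : inCD H) :
    Subgroup.center (CrossGroup p) ≤ H := by
  obtain ⟨U, -, rfl⟩ := inCD_iff.1 hH
  rw [center_eq_preimage_bot, OrderEmbedding.le_iff_le]
  exact bot_le

lemma inCD_and_center_lt_and_lt_top_iff {H : Subgroup (CrossGroup p)} :
    inCD H ∧ Subgroup.center (CrossGroup p) < H ∧ H < ⊤ ↔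
      ∃ a : ZMod p × ZMod p, a ≠ 0 ∧ H = preimage _ (lineTensor a) := by
  rw [inCD_iff, center_eq_preimage_bot, ← preimage_top]
  constructor
  · rintro ⟨⟨U, rfl | rfl | ⟨a, ha, rfl⟩, rfl⟩, hbot, htop⟩
    · exact absurd hbot (lt_irrefl _)
    · exact absurd htop (lt_irrefl _)
    · exact ⟨a, ha, rfl⟩
  · rintro ⟨a, ha, rfl⟩
    refine ⟨⟨_, .inr (.inr ⟨a, ha, rfl⟩), rfl⟩, ?_⟩
    have hrank := finrank_lineTensor (W := Fin 3 → ZMod p) ha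
    rw [OrderEmbedding.lt_iff_lt, OrderEmbedding.lt_iff_lt, bot_lt_iff_ne_bot, lt_top_iff_ne_top]
    constructor <;> intro h
    · rw [h, finrank_bot] at hrank
      simp at hrank
    · rw [h, finrank_top] at hrank
      simp at hrank

lemma eq_of_center_lt_of_le_of_lt_top {K K' : Subgroup (CrossGroup p)} (hK : inCD K)
    (hK' : inCD K') (hcenter : Subgroup.center (CrossGroup p) < K) (hle : K ≤ K')
    (htop : K' < ⊤) : K = K' := by
  obtain ⟨a, ha, rfl⟩ := inCD_and_center_lt_and_lt_top_iff.1 ⟨hK, hcenter, hle.trans_lt htop⟩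
  obtain ⟨b, hb, rfl⟩ := inCD_and_center_lt_and_lt_top_iff.1 ⟨hK', hcenter.trans_le hle, htop⟩
  rw [lineTensor_eq_of_le ha hb ((preimage _).le_iff_le.1 hle)]

lemma ncard_atoms :
    {H : Subgroup (CrossGroup p) |
      inCD H ∧ Subgroup.center (CrossGroup p) < H ∧ H < ⊤}.ncard = p + 1 := by
  have himage : {H : Subgroup (CrossGroup p) |
      inCD H ∧ Subgroup.center (CrossGroup p) < H ∧ H < ⊤} =
      preimage _ '' {U | ∃ a : ZMod p × ZMod p, a ≠ 0 ∧ U = lineTensor a} := by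
    ext H
    simp only [Set.mem_ofPred_eq, inCD_and_center_lt_and_lt_top_iff, Set.mem_image]
    constructor
    · rintro ⟨a, ha, rfl⟩
      exact ⟨_, ⟨a, ha, rfl⟩, rfl⟩
    · rintro ⟨_, ⟨a, ha, rfl⟩, rfl⟩
      exact ⟨a, ha, rfl⟩
  rw [himage, Set.ncard_image_of_injective _ (preimage _).injective, ncard_setOf_lineTensor,
    Nat.card_zmod]

lemma ncard_abelian_atoms :
    {H : Subgroup (CrossGroup p) | inCD H ∧ Subgroup.center (CrossGroup p) < H ∧ H < ⊤ ∧
      ∀ x y : H, x * y = y * x}.ncard = {s : ZMod p | s ^ 2 = -1}.ncard := by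
  have himage : {H : Subgroup (CrossGroup p) | inCD H ∧ Subgroup.center (CrossGroup p) < H ∧
      H < ⊤ ∧ ∀ x y : H, x * y = y * x} =
      preimage _ '' {U | ∃ a : ZMod p × ZMod p, a ≠ 0 ∧ a.1 ^ 2 + a.2 ^ 2 = 0 ∧
        U = lineTensor a} := by
    ext H
    simp only [Set.mem_ofPred_eq, Set.mem_image, ← lineTensor_le_orthogonal_iff,
      ← commutatorForm_crossCocycle, ← forall_mul_comm_preimage_iff]
    constructor
    · rintro ⟨hCD, hcenter, htop, hcomm⟩
      obtain ⟨a, ha, rfl⟩ := inCD_and_center_lt_and_lt_top_iff.1 ⟨hCD, hcenter, htop⟩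
      exact ⟨_, ⟨a, ha, hcomm, rfl⟩, rfl⟩
    · rintro ⟨_, ⟨a, ha, hcomm, rfl⟩, rfl⟩
      obtain ⟨hCD, hcenter, htop⟩ := inCD_and_center_lt_and_lt_top_iff.2 ⟨a, ha, rfl⟩
      exact ⟨hCD, hcenter, htop, hcomm⟩
  rw [himage, Set.ncard_image_of_injective _ (preimage _).injective,
    ncard_setOf_isotropic_lineTensor]

end CrossGroup

end CrossGroup

lemma ncard_setOf_sq_eq_neg_one (p : ℕ) [Fact p.Prime] :
    ({s : ZMod p | s ^ 2 = -1}.ncard : ℤ) = ZMod.χ₄ p + 1 := by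
  rcases eq_or_ne p 2 with rfl | hp
  · have hone : {s : ZMod 2 | s ^ 2 = -1} = {1} := by
      ext s
      rw [Set.mem_ofPred_eq, ZMod.pow_card, ZMod.neg_eq_self_mod_two, Set.mem_singleton_iff]
    rw [hone, Set.ncard_singleton]
    decide
  · have h := legendreSym.card_sqrts p hp (-1)
    rw [legendreSym.at_neg_one hp] at h
    rw [← h, Set.ncard_eq_toFinset_card']
    simp

/-- for every prime `p` there is a finite group `P` of order `p^9`
such that `CD(P)` is a quasi-antichain of width `p + 1` with `P ∈ CD(P)`, whose
number of abelian atoms is exactly 1 if `p = 2`, exactly 2 if `p ≡ 1 (mod 4)`,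
and 0 if `p ≡ 3 (mod 4)`. -/
theorem stmt18 (p : ℕ) (hp : p.Prime) :
    ∃ (P : Type) (grp : Group P) (fin : Finite P),
      @GoodCDwidthPplus1 P grp fin p := by
  have : Fact p.Prime := ⟨hp⟩
  have hsqrt := ncard_setOf_sq_eq_neg_one p
  refine ⟨CrossGroup p, inferInstance, inferInstance, CrossGroup.natCard_eq, CrossGroup.inCD_top,
    CrossGroup.inCD_center, fun _ ↦ CrossGroup.center_le_of_inCD,
    fun _ _ ↦ CrossGroup.eq_of_center_lt_of_le_of_lt_top, CrossGroup.ncard_atoms, ?_⟩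
  rw [CrossGroup.ncard_abelian_atoms]
  refine ⟨?_, fun h ↦ ?_, fun h ↦ ?_⟩
  · rintro rfl
    rw [show ZMod.χ₄ (2 : ℕ) = 0 by decide] at hsqrt
    lia
  · rw [ZMod.χ₄_nat_one_mod_four h] at hsqrt
    lia
  · rw [ZMod.χ₄_nat_three_mod_four h] at hsqrt
    lia
end
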